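/- arXiv:1101.2718 — 2 statements merged into one kernel-verified Lean document; each statement's English description precedes it below -/
import Mathlib

section
/- For every n ≥ 3, the nim-value of graph chomp on the cycle graph C_n is 0; that is, every cycle is a second-player win. -/
/-!
The proof is a symmetry strategy. If an involution of the vertex set preserves a position and no
face of the position lies inside its own mirror image, then the second player wins by answering
every move with its mirror image (`grundy_eq_zero_of_free_involution`).

On the cycle with vertex set `Fin n`, each reflection `i ↦ a - i` fixes exactly two cells
(vertices or edges): the cells whose endpoints `u, v` satisfy `u + v = a`. They are antipodal,
with one endpoint represented by `a / 2` and by `(a + n) / 2` respectively, and neither contains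
the other. Every cell is fixed by some reflection, so the second player answers the first move
with the antipodal cell (`exists_reflection`), after which no face is fixed and the symmetry
strategy applies.
-/

attribute [local instance] Classical.propDecidable

/-- The minimal excludant of a finite set of naturals. -/
noncomputable def mex (s : Finset ℕ) : ℕ := sInf {n : ℕ | n ∉ s}

/-- The position resulting from choosing `σ` in subset take-away:
remove `σ` together with every element containing it. -/
noncomputable def takeawayMove {V : Type*} [DecidableEq V] (Δ : Finset (Finset V))
    (σ : Finset V) : Finset (Finset V) :=
  Δ.filter (fun t => ¬ σ ⊆ t)

/-- The Grundy (nim-)value of subset take-away played on `Δ`: the minimal excludant of the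
Grundy values of all positions reachable in one move. -/
noncomputable def grundy {V : Type*} [DecidableEq V] (Δ : Finset (Finset V)) : ℕ :=
  mex (Δ.attach.image (fun σ => grundy (takeawayMove Δ σ.1)))
termination_by Δ.card
decreasing_by
  simp only [takeawayMove]
  exact Finset.card_lt_card (Finset.filter_ssubset.mpr ⟨σ.1, σ.2, by simp⟩)

/-- The simplicial complex of vertices and edges of a finite simple graph `G`.
Graph chomp on `G` is subset take-away on this complex, so the nim-value of graph chomp
on `G` is `grundy (graphComplex G)`. -/
noncomputable def graphComplex {V : Type*} [Fintype V] [DecidableEq V] (G : SimpleGraph V) :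
    Finset (Finset V) :=
  (Finset.univ : Finset V).image (fun v => ({v} : Finset V)) ∪
    Finset.univ.filter (fun s : Finset V => ∃ u v, G.Adj u v ∧ s = {u, v})

/-! ### Symmetry strategies in subset take-away -/

section Game

variable {V : Type*}

lemma map_map_involution {τ : V ≃ V} (hτ : ∀ x, τ (τ x) = x) (s : Finset V) :
    (s.map τ.toEmbedding).map τ.toEmbedding = s := by
  rw [Finset.map_map]
  convert Finset.map_refl
  ext x
  exact hτ x

lemma subset_map_iff {τ : V ≃ V} (hτ : ∀ x, τ (τ x) = x) (s t : Finset V) :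
    s ⊆ t.map τ.toEmbedding ↔ s.map τ.toEmbedding ⊆ t := by
  conv_lhs => rw [← map_map_involution hτ s]
  exact Finset.map_subset_map

variable [DecidableEq V]

lemma mex_eq_zero_iff (s : Finset ℕ) : mex s = 0 ↔ 0 ∉ s := by
  unfold mex
  rw [Nat.sInf_eq_zero]
  constructor
  · rintro (h | h)
    · exact h
    · obtain ⟨m, hm⟩ := Infinite.exists_notMem_finset s
      have : m ∈ {n : ℕ | n ∉ s} := hm
      simp [h] at this
  · exact fun h => Or.inl h

lemma grundy_eq_zero_iff (Δ : Finset (Finset V)) :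
    grundy Δ = 0 ↔ ∀ σ ∈ Δ, grundy (takeawayMove Δ σ) ≠ 0 := by
  rw [grundy, mex_eq_zero_iff]
  simp

lemma mem_takeawayMove {Δ : Finset (Finset V)} {σ t : Finset V} :
    t ∈ takeawayMove Δ σ ↔ t ∈ Δ ∧ ¬ σ ⊆ t := by
  simp [takeawayMove]

lemma grundy_ne_zero_of_move {Δ : Finset (Finset V)} {ρ : Finset V} (hρ : ρ ∈ Δ)
    (h : grundy (takeawayMove Δ ρ) = 0) : grundy Δ ≠ 0 :=
  fun h0 => (grundy_eq_zero_iff Δ).1 h0 ρ hρ h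

/-- The mirror strategy: each move `σ` is answered by its image under `τ`, which is still
available because `σ` is not contained in it. -/
lemma grundy_eq_zero_of_free_involution {τ : V ≃ V} (hτ : ∀ x, τ (τ x) = x)
    (Δ : Finset (Finset V)) (hinv : ∀ s ∈ Δ, s.map τ.toEmbedding ∈ Δ)
    (hfree : ∀ s ∈ Δ, ¬ s ⊆ s.map τ.toEmbedding) : grundy Δ = 0 := by
  induction hc : Δ.card using Nat.strong_induction_on generalizing Δ with
  | _ c ih =>
    subst hc
    rw [grundy_eq_zero_iff]
    intro σ hσ
    have hρ : σ.map τ.toEmbedding ∈ takeawayMove Δ σ :=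
      mem_takeawayMove.2 ⟨hinv σ hσ, hfree σ hσ⟩
    refine grundy_ne_zero_of_move hρ (ih _ ?_ _ ?_ ?_ rfl)
    · refine Finset.card_lt_card ⟨fun t ht => ?_, fun h => ?_⟩
      · exact (mem_takeawayMove.1 (mem_takeawayMove.1 ht).1).1
      · exact (mem_takeawayMove.1 (mem_takeawayMove.1 (h hσ)).1).2 subset_rfl
    · intro s hs
      simp only [mem_takeawayMove] at hs ⊢
      obtain ⟨⟨h1, h2⟩, h3⟩ := hs
      refine ⟨⟨hinv s h1, ?_⟩, ?_⟩
      · rwa [subset_map_iff hτ]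
      · rwa [Finset.map_subset_map]
    · intro s hs
      exact hfree s (mem_takeawayMove.1 (mem_takeawayMove.1 hs).1).1

/-- If `σ` and `ρ` are the only faces fixed by `τ`, then `ρ` is a winning answer to `σ`. -/
lemma grundy_takeawayMove_ne_zero {τ : V ≃ V} (hτ : ∀ x, τ (τ x) = x)
    {Δ : Finset (Finset V)} (hinv : ∀ s ∈ Δ, s.map τ.toEmbedding ∈ Δ) {σ ρ : Finset V}
    (hρ : ρ ∈ Δ) (hσρ : ¬ σ ⊆ ρ)
    (hσf : σ.map τ.toEmbedding = σ) (hρf : ρ.map τ.toEmbedding = ρ)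
    (hfix : ∀ s ∈ Δ, s.map τ.toEmbedding = s → s = σ ∨ s = ρ) :
    grundy (takeawayMove Δ σ) ≠ 0 := by
  refine grundy_ne_zero_of_move (mem_takeawayMove.2 ⟨hρ, hσρ⟩)
    (grundy_eq_zero_of_free_involution hτ _ ?_ ?_)
  · intro s hs
    simp only [mem_takeawayMove, subset_map_iff hτ, hσf, hρf] at hs ⊢
    exact ⟨⟨hinv s hs.1.1, hs.1.2⟩, hs.2⟩
  · intro s hs hsub
    simp only [mem_takeawayMove] at hs
    have heq : s.map τ.toEmbedding = s :=
      (Finset.eq_of_subset_of_card_le hsub (by simp)).symm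
    rcases hfix s hs.1.1 heq with rfl | rfl
    · exact hs.1.2 subset_rfl
    · exact hs.2 subset_rfl

lemma mem_graphComplex [Fintype V] (G : SimpleGraph V) (s : Finset V) :
    s ∈ graphComplex G ↔ ∃ u v, (u = v ∨ G.Adj u v) ∧ ∀ x, x ∈ s ↔ x = u ∨ x = v := by
  simp only [graphComplex, Finset.mem_union, Finset.mem_image, Finset.mem_univ, true_and,
    Finset.mem_filter]
  constructor
  · rintro (⟨v, rfl⟩ | ⟨u, v, h, rfl⟩)
    · exact ⟨v, v, Or.inl rfl, by simp⟩
    · exact ⟨u, v, Or.inr h, by simp⟩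
  · rintro ⟨u, v, rfl | h, hs⟩
    · exact Or.inl ⟨u, by ext x; simp [hs]⟩
    · exact Or.inr ⟨u, v, h, by ext x; simp [hs]⟩

end Game

/-! ### Reflections of the cycle -/

section Cycle

variable {m : ℕ}

/-- The reflection `i ↦ a - i` of the cycle. -/
def reflection (a : Fin (m + 3)) : Fin (m + 3) ≃ Fin (m + 3) := Equiv.subLeft a

lemma reflection_apply (a x : Fin (m + 3)) : reflection a x = a - x := rfl

lemma reflection_reflection (a x : Fin (m + 3)) : reflection a (reflection a x) = x := by
  simp [reflection_apply]

lemma mem_map_reflection (a x : Fin (m + 3)) (s : Finset (Fin (m + 3))) :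
    x ∈ s.map (reflection a).toEmbedding ↔ a - x ∈ s := by
  constructor
  · intro h
    obtain ⟨y, hy, rfl⟩ := Finset.mem_map.1 h
    simpa [reflection_apply] using hy
  · intro h
    exact Finset.mem_map.2 ⟨a - x, h, by simp [reflection_apply]⟩

/-- A cell of the cycle: a vertex (`v = u`) or an edge, listed in its positive orientation. -/
lemma mem_cycle [DecidableEq (Fin (m + 3))] (s : Finset (Fin (m + 3))) :
    s ∈ graphComplex (SimpleGraph.cycleGraph (m + 3)) ↔
      ∃ u v, (v = u ∨ v = u + 1) ∧ ∀ x, x ∈ s ↔ x = u ∨ x = v := by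
  rw [mem_graphComplex]
  have hadj : ∀ u v : Fin (m + 3), (SimpleGraph.cycleGraph (m + 3)).Adj u v ↔
      u = v + 1 ∨ v = u + 1 := by
    intro u v
    rw [SimpleGraph.cycleGraph_adj (n := m + 1), sub_eq_iff_eq_add', sub_eq_iff_eq_add',
      add_comm v, add_comm u, add_comm 1, add_comm 1]
  simp only [hadj]
  constructor
  · rintro ⟨u, v, rfl | h | h, hs⟩
    · exact ⟨u, u, Or.inl rfl, hs⟩
    · exact ⟨v, u, Or.inr h, fun x => (hs x).trans or_comm⟩
    · exact ⟨u, v, Or.inr h, hs⟩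
  · rintro ⟨u, v, rfl | h, hs⟩
    · exact ⟨v, v, Or.inl rfl, hs⟩
    · exact ⟨u, v, Or.inr (Or.inr h), hs⟩

lemma map_reflection_mem [DecidableEq (Fin (m + 3))] (a : Fin (m + 3))
    (s : Finset (Fin (m + 3))) (hs : s ∈ graphComplex (SimpleGraph.cycleGraph (m + 3))) :
    s.map (reflection a).toEmbedding ∈ graphComplex (SimpleGraph.cycleGraph (m + 3)) := by
  rw [mem_cycle] at hs ⊢
  obtain ⟨u, v, h, hs⟩ := hs
  refine ⟨a - v, a - u, ?_, fun x => ?_⟩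
  · rcases h with rfl | rfl
    · exact Or.inl rfl
    · right; abel
  · have hflip : ∀ y, a - x = y ↔ x = a - y := fun y =>
      ⟨fun h => by rw [← h]; abel, fun h => by rw [h]; abel⟩
    rw [mem_map_reflection, hs, or_comm, hflip, hflip]

lemma val_add_one_cases (u : Fin (m + 3)) :
    (u + 1).val = u.val + 1 ∧ u.val + 1 < m + 3 ∨ (u + 1).val = 0 ∧ u.val = m + 2 := by
  have := u.isLt
  have h := Fin.val_add_eq_ite u 1
  rw [show (1 : Fin (m + 3)).val = 1 from rfl] at h
  split_ifs at h <;> omega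

lemma val_add_cases (u v : Fin (m + 3)) :
    (u + v).val = u.val + v.val ∨ (u + v).val + (m + 3) = u.val + v.val := by
  have := u.isLt
  rw [Fin.val_add_eq_ite]
  split_ifs <;> omega

/-- The endpoints of a cell fixed by the reflection `i ↦ a - i` sum to `a`. An edge cannot have
both endpoints fixed individually, as `2 ≠ 0` in `Fin (m + 3)`. -/
lemma add_eq_of_fixed {a u v : Fin (m + 3)} {s : Finset (Fin (m + 3))}
    (h : v = u ∨ v = u + 1) (hs : ∀ x, x ∈ s ↔ x = u ∨ x = v)
    (hfix : s.map (reflection a).toEmbedding = s) : u + v = a := by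
  have key : ∀ x, x ∈ s → a - x ∈ s := fun x hx => by
    rw [← mem_map_reflection, hfix]; exact hx
  have hu := (hs _).1 (key u ((hs u).2 (Or.inl rfl)))
  have hv := (hs _).1 (key v ((hs v).2 (Or.inr rfl)))
  simp only [sub_eq_iff_eq_add] at hu hv
  rcases hu with hu | hu
  · rcases hv with hv | hv
    · exact hv.symm
    · rcases h with rfl | rfl
      · exact hv.symm
      · exfalso
        have h1 : u = u + 1 + 1 := by
          have := hu.symm.trans hv
          rw [add_assoc, add_right_inj] at this
          exact this.trans (add_comm _ _)
        have h2 := congrArg Fin.val h1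
        have h3 := val_add_one_cases u
        have h4 := val_add_one_cases (u + 1)
        omega
  · rw [hu]; abel

/-- For each `a` there is a cell whose endpoints sum to `a` and whose first endpoint is any
given `u` with `2u ∈ {a, a - 1}`; it is fixed by the reflection. -/
lemma exists_fixed_cell [DecidableEq (Fin (m + 3))] (a u : Fin (m + 3))
    (h : a = u + u ∨ a = u + u + 1) :
    ∃ s ∈ graphComplex (SimpleGraph.cycleGraph (m + 3)),
      s.map (reflection a).toEmbedding = s ∧ ∀ x, x ∈ s ↔ x = u ∨ x = a - u := by
  refine ⟨{u, a - u}, (mem_cycle _).2 ⟨u, a - u, ?_, by simp⟩, ?_, by simp⟩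
  · rcases h with rfl | rfl
    · left; abel
    · right; abel
  · ext x
    rw [mem_map_reflection]
    simp only [Finset.mem_insert, Finset.mem_singleton]
    have hflip : a - x = u ↔ x = a - u :=
      ⟨fun h => by rw [← h]; abel, fun h => by rw [h]; abel⟩
    rw [sub_right_inj, or_comm, hflip]

/-- Every cell of the cycle is fixed by a reflection whose only other fixed cell is its
antipode `ρ`. -/
lemma exists_reflection [DecidableEq (Fin (m + 3))] (σ : Finset (Fin (m + 3)))
    (hσ : σ ∈ graphComplex (SimpleGraph.cycleGraph (m + 3))) :
    ∃ a, ∃ ρ ∈ graphComplex (SimpleGraph.cycleGraph (m + 3)), ¬ σ ⊆ ρ ∧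
      σ.map (reflection a).toEmbedding = σ ∧ ρ.map (reflection a).toEmbedding = ρ ∧
      ∀ s ∈ graphComplex (SimpleGraph.cycleGraph (m + 3)),
        s.map (reflection a).toEmbedding = s → s = σ ∨ s = ρ := by
  obtain ⟨u, v, h, hs⟩ := (mem_cycle σ).1 hσ
  obtain ⟨a, rfl⟩ : ∃ a, v = a - u := ⟨u + v, by abel⟩
  have ha : a = u + u ∨ a = u + u + 1 := by
    rcases h with h | h
    · left; exact sub_eq_iff_eq_add.1 h
    · right; rw [sub_eq_iff_eq_add.1 h]; abel
  -- First endpoints of cells fixed by the reflection are the residues `w` with `2w ∈ {a, a - 1}`.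
  have hval : ∀ w : Fin (m + 3), (a = w + w ∨ a = w + w + 1) ↔
      w.val = a.val / 2 ∨ w.val = (a.val + (m + 3)) / 2 := by
    intro w
    have h1 := val_add_cases w w
    have h2 := val_add_one_cases (w + w)
    have h3 := w.isLt
    have h4 := a.isLt
    have h5 := (w + w).isLt
    simp only [Fin.ext_iff]
    generalize (w + w + 1).val = y at *
    generalize (w + w).val = z at *
    omega
  obtain ⟨w, hw, hwu⟩ : ∃ w : Fin (m + 3), (a = w + w ∨ a = w + w + 1) ∧
      (w.val = a.val / 2 ∧ u.val = (a.val + (m + 3)) / 2 ∨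
        u.val = a.val / 2 ∧ w.val = (a.val + (m + 3)) / 2) := by
    have h4 := a.isLt
    rcases (hval u).1 ha with h | h
    · exact ⟨⟨(a.val + (m + 3)) / 2, by omega⟩, (hval _).2 (Or.inr rfl), Or.inr ⟨h, rfl⟩⟩
    · exact ⟨⟨a.val / 2, by omega⟩, (hval _).2 (Or.inl rfl), Or.inl ⟨rfl, h⟩⟩
  obtain ⟨ρ, hρ, hρf, hρm⟩ := exists_fixed_cell a w hw
  obtain ⟨σ', -, hσf, hσm⟩ := exists_fixed_cell a u ha
  obtain rfl : σ' = σ := by ext x; rw [hs, hσm]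
  refine ⟨a, ρ, hρ, ?_, hσf, hρf, ?_⟩
  · intro hsub
    have h4 := a.isLt
    rcases (hρm u).1 (hsub ((hs u).2 (Or.inl rfl))) with h | h
    · rw [Fin.ext_iff] at h
      omega
    · have h5 := val_add_cases u w
      rw [← eq_sub_iff_add_eq.1 h] at h4 hwu
      omega
  · intro s hsΔ hsf
    obtain ⟨x, y, hxy, hsm⟩ := (mem_cycle s).1 hsΔ
    have hsum := add_eq_of_fixed hxy hsm hsf
    obtain rfl : y = a - x := by rw [← hsum]; abel
    have hx : a = x + x ∨ a = x + x + 1 := by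
      rcases hxy with h | h
      · left; exact sub_eq_iff_eq_add.1 h
      · right; rw [sub_eq_iff_eq_add.1 h]; abel
    have hxuw : x = u ∨ x = w := by
      have := (hval x).1 hx
      simp only [Fin.ext_iff]
      omega
    rcases hxuw with rfl | rfl
    · left; ext y; rw [hsm, hs]
    · right; ext y; rw [hsm, hρm]

end Cycle

/-- For every `n ≥ 3`, the nim-value of graph chomp on the cycle graph
`C_n` is `0`: every cycle is a second-player win. -/
theorem grundy_cycleGraph (n : ℕ) (hn : 3 ≤ n) :
    grundy (graphComplex (SimpleGraph.cycleGraph n)) = 0 := by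
  obtain ⟨m, rfl⟩ := Nat.exists_eq_add_of_le' hn
  rw [grundy_eq_zero_iff]
  intro σ hσ
  obtain ⟨a, ρ, hρ, hσρ, hσf, hρf, hfix⟩ := exists_reflection σ hσ
  exact grundy_takeawayMove_ne_zero (reflection_reflection a) (map_reflection_mem a) hρ hσρ
    hσf hρf hfix
end

section
/- Let G be a pseudotree whose unique cycle has even length, and let v(G) be its number of vertices. Then the nim-value of graph chomp on G is 3 if v(G) is odd and 0 if v(G) is even. -/
/-!
The nim-value of graph chomp on *every* bipartite graph with `v` vertices and `e` edges is
`v % 2 + 2 * (e % 2)`; this is `grundy_of_isBipartiteComplex`, proved by induction on the size of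
the position. A move either deletes an edge, flipping the parity of `e` only, or deletes a vertex,
flipping the parity of `v`, so no move preserves this value. It remains to reach all smaller values.
Deleting an edge clears an odd `e`. By the handshake lemma, if `v` is odd there is a vertex of even
degree (`exists_even_degree`), and deleting it flips `v` and keeps the parity of `e`. If `e` is odd,
then the degrees of the vertices of one colour class sum to `e`, so some vertex has odd degree
(`exists_odd_degree`), and deleting it flips both parities.

A pseudotree with an even cycle is bipartite (`exists_two_coloring`): deleting an edge of the cycle
leaves a tree, a 2-colouring of the tree gives different colours to the ends of the deleted edge
because the rest of the cycle is a path of odd length between them, and so it is also a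
2-colouring of the whole graph. As `v = e`, the nim-value is `3` or `0` according to parity.
-/

attribute [local instance] Classical.propDecidable

/-! ### Minimal excludants -/

lemma mex_eq {s : Finset ℕ} {n : ℕ} (hn : n ∉ s) (h : ∀ m < n, m ∈ s) : mex s = n := by
  refine le_antisymm (Nat.sInf_le hn) ?_
  by_contra hlt
  exact Nat.sInf_mem (s := {n : ℕ | n ∉ s}) ⟨n, hn⟩ (h _ (not_le.mp hlt))

lemma grundy_eq {V : Type*} [DecidableEq V] {Δ : Finset (Finset V)} {n : ℕ}
    (hn : ∀ σ ∈ Δ, grundy (takeawayMove Δ σ) ≠ n)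
    (h : ∀ m < n, ∃ σ ∈ Δ, grundy (takeawayMove Δ σ) = m) : grundy Δ = n := by
  rw [grundy]
  apply mex_eq
  · simpa using hn
  · intro m hm
    simpa using h m hm

/-! ### Positions of graph chomp on bipartite graphs -/

section Complex

variable {V : Type*} [DecidableEq V]

/-- `Δ` consists of the vertices and edges of a graph that is properly 2-coloured by `col`:
each member is a singleton, or a pair of differently coloured points whose singletons
belong to `Δ`. -/
def IsBipartiteComplex (col : V → Bool) (Δ : Finset (Finset V)) : Prop :=
  ∀ s ∈ Δ, (∃ v, s = {v}) ∨
    ∃ u v, s = {u, v} ∧ col u = true ∧ col v = false ∧ {u} ∈ Δ ∧ {v} ∈ Δ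

/-- The vertices of the complex `Δ`, as singletons. -/
def vertices (Δ : Finset (Finset V)) : Finset (Finset V) := Δ.filter (fun s => s.card = 1)

/-- The edges of the complex `Δ`. -/
def edges (Δ : Finset (Finset V)) : Finset (Finset V) := Δ.filter (fun s => s.card = 2)

/-- The number of edges of `Δ` that contain `σ`; for a vertex `σ` this is its degree. -/
def edgeDegree (Δ : Finset (Finset V)) (σ : Finset V) : ℕ := ((edges Δ).filter (σ ⊆ ·)).card

variable {col : V → Bool} {Δ : Finset (Finset V)}

lemma IsBipartiteComplex.takeawayMove (h : IsBipartiteComplex col Δ) (σ : Finset V) :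
    IsBipartiteComplex col (takeawayMove Δ σ) := by
  intro s hs
  simp only [_root_.takeawayMove, Finset.mem_filter] at hs ⊢
  obtain ⟨v, rfl⟩ | ⟨u, v, rfl, hu, hv, hu_mem, hv_mem⟩ := h s hs.1
  · exact Or.inl ⟨v, rfl⟩
  · refine Or.inr ⟨u, v, rfl, hu, hv, ⟨hu_mem, fun hσ => hs.2 (hσ.trans ?_)⟩,
      ⟨hv_mem, fun hσ => hs.2 (hσ.trans ?_)⟩⟩ <;> simp

lemma IsBipartiteComplex.mem_vertices_or_mem_edges (h : IsBipartiteComplex col Δ) {s : Finset V}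
    (hs : s ∈ Δ) : s ∈ vertices Δ ∨ s ∈ edges Δ := by
  simp only [vertices, edges, Finset.mem_filter, hs, true_and]
  obtain ⟨v, rfl⟩ | ⟨u, v, rfl, hu, hv, -⟩ := h s hs
  · simp
  · refine Or.inr (Finset.card_pair ?_)
    rintro rfl
    simp_all

lemma IsBipartiteComplex.exists_of_mem_edges (h : IsBipartiteComplex col Δ) {s : Finset V}
    (hs : s ∈ edges Δ) :
    ∃ u v, s = {u, v} ∧ col u = true ∧ col v = false ∧ {u} ∈ vertices Δ ∧ {v} ∈ vertices Δ := by
  simp only [edges, vertices, Finset.mem_filter] at hs ⊢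
  obtain ⟨v, rfl⟩ | ⟨u, v, rfl, hu, hv, hu_mem, hv_mem⟩ := h s hs.1
  · simp at hs
  · exact ⟨u, v, rfl, hu, hv, by simpa using hu_mem, by simpa using hv_mem⟩

lemma vertices_takeawayMove_edge {σ : Finset V} (hσ : σ ∈ edges Δ) :
    vertices (takeawayMove Δ σ) = vertices Δ := by
  ext t
  simp only [edges, vertices, takeawayMove, Finset.mem_filter] at hσ ⊢
  refine ⟨fun ht => ⟨ht.1.1, ht.2⟩, fun ht => ⟨⟨ht.1, fun hsub => ?_⟩, ht.2⟩⟩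
  have := Finset.card_le_card hsub
  omega

lemma edges_takeawayMove_edge {σ : Finset V} (hσ : σ ∈ edges Δ) :
    edges (takeawayMove Δ σ) = (edges Δ).erase σ := by
  ext t
  simp only [edges, takeawayMove, Finset.mem_filter, Finset.mem_erase] at hσ ⊢
  refine ⟨fun ht => ⟨fun hne => ht.1.2 (hne ▸ subset_rfl), ht.1.1, ht.2⟩,
    fun ht => ⟨⟨ht.2.1, fun hsub => ?_⟩, ht.2.2⟩⟩
  exact ht.1 (Finset.eq_of_subset_of_card_le hsub (by omega)).symm

lemma vertices_takeawayMove_vertex {σ : Finset V} (hσ : σ ∈ vertices Δ) :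
    vertices (takeawayMove Δ σ) = (vertices Δ).erase σ := by
  ext t
  simp only [vertices, takeawayMove, Finset.mem_filter, Finset.mem_erase] at hσ ⊢
  refine ⟨fun ht => ⟨fun hne => ht.1.2 (hne ▸ subset_rfl), ht.1.1, ht.2⟩,
    fun ht => ⟨⟨ht.2.1, fun hsub => ?_⟩, ht.2.2⟩⟩
  exact ht.1 (Finset.eq_of_subset_of_card_le hsub (by omega)).symm

lemma card_edges_takeawayMove_add (σ : Finset V) :
    (edges (takeawayMove Δ σ)).card + edgeDegree Δ σ = (edges Δ).card := by
  have : edges (takeawayMove Δ σ) = (edges Δ).filter (fun t => ¬ σ ⊆ t) := by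
    ext t
    simp only [edges, takeawayMove, Finset.mem_filter]
    tauto
  rw [this, edgeDegree, add_comm]
  exact Finset.card_filter_add_card_filter_not _

/-! ### Vertices of prescribed degree parity -/

lemma sum_edgeDegree (S : Finset (Finset V)) :
    ∑ σ ∈ S, edgeDegree Δ σ = ∑ t ∈ edges Δ, (S.filter (· ⊆ t)).card :=
  Finset.sum_card_bipartiteAbove_eq_sum_card_bipartiteBelow (fun a b : Finset V => a ⊆ b)

/-- Handshake lemma: each edge contains exactly two vertices. -/
lemma IsBipartiteComplex.sum_edgeDegree_vertices (h : IsBipartiteComplex col Δ) :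
    ∑ σ ∈ vertices Δ, edgeDegree Δ σ = (edges Δ).card * 2 := by
  rw [sum_edgeDegree]
  refine Finset.sum_const_nat fun t ht => ?_
  obtain ⟨u, v, rfl, hu, hv, hu_mem, hv_mem⟩ := h.exists_of_mem_edges ht
  have huv : ({u} : Finset V) ≠ {v} := by
    rw [Ne, Finset.singleton_inj]
    rintro rfl
    simp_all
  rw [← Finset.card_pair huv]
  congr 1
  ext s
  simp only [Finset.mem_filter, Finset.mem_insert, Finset.mem_singleton]
  constructor
  · rintro ⟨hs, hsub⟩
    obtain ⟨w, rfl⟩ := Finset.card_eq_one.mp (Finset.mem_filter.mp hs).2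
    simpa using hsub
  · rintro (rfl | rfl)
    · exact ⟨hu_mem, by simp⟩
    · exact ⟨hv_mem, by simp⟩

/-- Each edge contains exactly one vertex of the colour class `true`. -/
lemma IsBipartiteComplex.sum_edgeDegree_colour_class (h : IsBipartiteComplex col Δ) :
    ∑ σ ∈ (vertices Δ).filter (fun s => ∀ x ∈ s, col x = true), edgeDegree Δ σ
      = (edges Δ).card := by
  rw [sum_edgeDegree, ← mul_one (edges Δ).card]
  refine Finset.sum_const_nat fun t ht => ?_
  obtain ⟨u, v, rfl, hu, hv, hu_mem, hv_mem⟩ := h.exists_of_mem_edges ht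
  rw [Finset.card_eq_one]
  refine ⟨{u}, ?_⟩
  ext s
  simp only [Finset.mem_filter, Finset.mem_singleton]
  constructor
  · rintro ⟨⟨hs, hcol⟩, hsub⟩
    obtain ⟨w, rfl⟩ := Finset.card_eq_one.mp (Finset.mem_filter.mp hs).2
    have hw : w = u ∨ w = v := by simpa using hsub
    obtain rfl | rfl := hw
    · rfl
    · simp_all
  · rintro rfl
    exact ⟨⟨hu_mem, by simpa using hu⟩, by simp⟩

lemma IsBipartiteComplex.exists_even_degree (h : IsBipartiteComplex col Δ)
    (hv : Odd (vertices Δ).card) : ∃ σ ∈ vertices Δ, Even (edgeDegree Δ σ) := by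
  by_contra! hno
  have hodd : (vertices Δ).filter (fun σ => Odd (edgeDegree Δ σ)) = vertices Δ :=
    Finset.filter_true_of_mem fun σ hσ => Nat.not_even_iff_odd.mp (hno σ hσ)
  have hsum := (Finset.odd_sum_iff_odd_card_odd (s := vertices Δ) (edgeDegree Δ)).mpr
    (by convert hv)
  rw [h.sum_edgeDegree_vertices] at hsum
  exact Nat.not_odd_iff_even.mpr (even_two.mul_left _) hsum

lemma IsBipartiteComplex.exists_odd_degree (h : IsBipartiteComplex col Δ)
    (he : Odd (edges Δ).card) : ∃ σ ∈ vertices Δ, Odd (edgeDegree Δ σ) := by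
  by_contra! hno
  refine Nat.not_even_iff_odd.mpr he ?_
  rw [← h.sum_edgeDegree_colour_class]
  exact Finset.even_sum _ fun σ hσ =>
    Nat.not_odd_iff_even.mp (hno σ (Finset.mem_of_mem_filter σ hσ))

/-! ### The nim-value of a bipartite graph -/

theorem grundy_of_isBipartiteComplex (Δ : Finset (Finset V)) (h : IsBipartiteComplex col Δ) :
    grundy Δ = (vertices Δ).card % 2 + 2 * ((edges Δ).card % 2) := by
  have ih : ∀ σ ∈ Δ, grundy (takeawayMove Δ σ) =
      (vertices (takeawayMove Δ σ)).card % 2 + 2 * ((edges (takeawayMove Δ σ)).card % 2) :=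
    fun σ hσ => grundy_of_isBipartiteComplex _ (h.takeawayMove σ)
  have hedge : ∀ σ ∈ edges Δ, grundy (takeawayMove Δ σ) =
      (vertices Δ).card % 2 + 2 * (((edges Δ).card + 1) % 2) := by
    intro σ hσ
    rw [ih σ (Finset.mem_of_mem_filter σ hσ), vertices_takeawayMove_edge hσ,
      edges_takeawayMove_edge hσ]
    have := Finset.card_erase_add_one hσ
    omega
  have hvertex : ∀ σ ∈ vertices Δ, grundy (takeawayMove Δ σ) =
      ((vertices Δ).card + 1) % 2 + 2 * (((edges Δ).card + edgeDegree Δ σ) % 2) := by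
    intro σ hσ
    rw [ih σ (Finset.mem_of_mem_filter σ hσ), vertices_takeawayMove_vertex hσ]
    have := Finset.card_erase_add_one hσ
    have := card_edges_takeawayMove_add (Δ := Δ) σ
    omega
  apply grundy_eq
  · intro σ hσ
    rcases h.mem_vertices_or_mem_edges hσ with hv | he
    · rw [hvertex σ hv]
      omega
    · rw [hedge σ he]
      omega
  · intro m hm
    rcases Nat.even_or_odd (edges Δ).card with he | he
    · -- Only `m = 0` is asked for, with `v` odd and `e` even: delete a vertex of even degree.
      obtain ⟨k, hk⟩ := he
      obtain ⟨σ, hσ, l, hl⟩ := h.exists_even_degree (Nat.odd_iff.mpr (by omega))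
      refine ⟨σ, Finset.mem_of_mem_filter σ hσ, ?_⟩
      rw [hvertex σ hσ]
      omega
    · by_cases hm1 : m = (vertices Δ).card % 2
      · -- The parity of `v` is kept: delete any edge.
        obtain ⟨σ, hσ⟩ := Finset.card_pos.mp he.pos
        refine ⟨σ, Finset.mem_of_mem_filter σ hσ, ?_⟩
        rw [hedge σ hσ]
        rw [Nat.odd_iff] at he
        omega
      · by_cases hm2 : m < 2
        · -- Both parities change: delete a vertex of odd degree.
          obtain ⟨σ, hσ, l, hl⟩ := h.exists_odd_degree he
          refine ⟨σ, Finset.mem_of_mem_filter σ hσ, ?_⟩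
          rw [hvertex σ hσ]
          rw [Nat.odd_iff] at he
          omega
        · -- Now `m = 2`, with `v` and `e` odd: delete a vertex of even degree.
          rw [Nat.odd_iff] at he
          obtain ⟨σ, hσ, l, hl⟩ := h.exists_even_degree (Nat.odd_iff.mpr (by omega))
          refine ⟨σ, Finset.mem_of_mem_filter σ hσ, ?_⟩
          rw [hvertex σ hσ]
          omega
termination_by Δ.card
decreasing_by
  simp only [takeawayMove]
  exact Finset.card_lt_card (Finset.filter_ssubset.mpr ⟨σ, hσ, by simp⟩)

end Complex

/-! ### The complex of a graph -/

section Graph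

variable {V : Type*} [Fintype V] [DecidableEq V] {G : SimpleGraph V}

lemma isBipartiteComplex_graphComplex {col : V → Bool}
    (hcol : ∀ u v, G.Adj u v → col u ≠ col v) : IsBipartiteComplex col (graphComplex G) := by
  have hmem : ∀ v : V, {v} ∈ graphComplex G := fun v => by simp [graphComplex]
  intro s hs
  simp only [graphComplex, Finset.mem_union, Finset.mem_image, Finset.mem_filter,
    Finset.mem_univ, true_and] at hs
  obtain ⟨v, rfl⟩ | ⟨u, v, hadj, rfl⟩ := hs
  · exact Or.inl ⟨v, rfl⟩
  · right
    have := hcol u v hadj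
    cases hu : col u
    · exact ⟨v, u, Finset.pair_comm u v, by simp_all, hu, hmem v, hmem u⟩
    · exact ⟨u, v, rfl, hu, by simp_all, hmem u, hmem v⟩

lemma card_vertices_graphComplex : (vertices (graphComplex G)).card = Fintype.card V := by
  have : vertices (graphComplex G) = Finset.univ.image (fun v : V => ({v} : Finset V)) := by
    ext s
    simp only [vertices, graphComplex, Finset.mem_filter, Finset.mem_union, Finset.mem_image,
      Finset.mem_univ, true_and]
    constructor
    · rintro ⟨-, hs⟩
      obtain ⟨v, rfl⟩ := Finset.card_eq_one.mp hs
      exact ⟨v, rfl⟩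
    · rintro ⟨v, rfl⟩
      exact ⟨Or.inl ⟨v, rfl⟩, by simp⟩
  rw [this, Finset.card_image_of_injective _ Finset.singleton_injective, Finset.card_univ]

lemma card_edges_graphComplex : (edges (graphComplex G)).card = G.edgeFinset.card := by
  have himage : edges (graphComplex G) = G.edgeFinset.image Sym2.toFinset := by
    ext s
    simp only [edges, graphComplex, Finset.mem_filter, Finset.mem_union, Finset.mem_image,
      Finset.mem_univ, true_and, SimpleGraph.mem_edgeFinset]
    constructor
    · rintro ⟨⟨v, rfl⟩ | ⟨u, v, hadj, rfl⟩, hs⟩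
      · simp at hs
      · exact ⟨s(u, v), hadj, by ext; simp⟩
    · rintro ⟨e, he, rfl⟩
      induction e with
      | _ u v =>
        have huv : s(u, v).toFinset = ({u, v} : Finset V) := by ext; simp
        rw [huv]
        exact ⟨Or.inr ⟨u, v, he, rfl⟩, Finset.card_pair (SimpleGraph.Adj.ne he)⟩
  rw [himage, Finset.card_image_of_injective]
  intro a b hab
  refine Sym2.ext fun z => ?_
  rw [← Sym2.mem_toFinset, ← Sym2.mem_toFinset]
  exact Finset.ext_iff.mp hab z

lemma exists_two_coloring (hconn : G.Connected) (hpseudo : G.edgeFinset.card = Fintype.card V)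
    (x : V) (c : G.Walk x x) (hc : c.IsCycle) (heven : Even c.length) :
    ∃ col : V → Bool, ∀ u v, G.Adj u v → col u ≠ col v := by
  cases c with
  | nil => simp at hc
  | @cons _ y _ hxy p =>
    have hp := (SimpleGraph.Walk.cons_isCycle_iff p hxy).mp hc
    have hbridge : ¬ G.IsBridge s(x, y) := fun hb => hb.notMem_edges_of_isCycle hc (by simp)
    have htree : (G.deleteEdges {s(x, y)}).IsTree := by
      rw [SimpleGraph.isTree_iff_connected_and_card]
      refine ⟨hconn.connected_delete_edge_of_not_isBridge hbridge, ?_⟩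
      have hmem : s(x, y) ∈ G.edgeSet := hxy
      rw [SimpleGraph.edgeSet_deleteEdges, Nat.card_eq_fintype_card (α := V), ← hpseudo,
        Nat.card_coe_set_eq, Set.ncard_sdiff_singleton_add_one hmem,
        ← SimpleGraph.coe_edgeFinset, Set.ncard_coe_finset]
    obtain ⟨col⟩ : Nonempty ((G.deleteEdges {s(x, y)}).Coloring Bool) :=
      ⟨htree.isBipartite.toColoring (by simp)⟩
    have hpodd : Odd (p.toDeleteEdge s(x, y) hp.2).length := by
      simp only [SimpleGraph.Walk.length_cons] at heven
      rw [SimpleGraph.Walk.toDeleteEdge, SimpleGraph.Walk.toDeleteEdges,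
        SimpleGraph.Walk.length_transfer]
      grind
    have hxy_col : col x ≠ col y := by
      have := (col.odd_length_iff_not_congr _).mp hpodd
      intro heq
      simp [heq] at this
    refine ⟨col, fun u v huv => ?_⟩
    by_cases he : s(u, v) = s(x, y)
    · rw [Sym2.eq_iff] at he
      obtain ⟨rfl, rfl⟩ | ⟨rfl, rfl⟩ := he
      · exact hxy_col
      · exact hxy_col.symm
    · exact col.valid (by simpa [SimpleGraph.deleteEdges_adj] using ⟨huv, by simpa using he⟩)

end Graph

/-- Let `G` be a pseudotree (a finite connected graph with exactly one
cycle, equivalently with as many edges as vertices) whose unique cycle has even length.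
Then the nim-value of graph chomp on `G` is `3` if `v(G)` is odd and `0` if `v(G)` is
even. -/
theorem grundy_even_pseudotree {V : Type*} [Fintype V] [DecidableEq V] (G : SimpleGraph V)
    (hconn : G.Connected) (hpseudo : G.edgeFinset.card = Fintype.card V)
    (x : V) (c : G.Walk x x) (hc : c.IsCycle) (heven : Even c.length) :
    (Odd (Fintype.card V) → grundy (graphComplex G) = 3) ∧
    (Even (Fintype.card V) → grundy (graphComplex G) = 0) := by
  obtain ⟨col, hcol⟩ := exists_two_coloring hconn hpseudo x c hc heven
  rw [grundy_of_isBipartiteComplex _ (isBipartiteComplex_graphComplex hcol),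
    card_vertices_graphComplex, card_edges_graphComplex, hpseudo, Nat.odd_iff, Nat.even_iff]
  omega
end
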